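/- Let k be a field, R = k[x_1,…,x_d], T = k[y_1,…,y_n], and B = R ⊗_k T, bigraded by bideg x_i = (1,0) and bideg y_j = (0,1). Let f_1,…,f_d be a B-regular sequence of bihomogeneous elements contained in m = (x_1,…,x_d)B with bideg f_i = (α_i,β_i), set S = B/(f_1,…,f_d), δ = (Σα_i) − d, τ = Σβ_i, and A = H^0_m(S). Then A_i = 0 for all i < 0 and all i > δ, and there is a graded isomorphism of T-modules A_δ ≅ T(−τ). -/

import Mathlib

/-!
STATEMENT 3: With `B = k[x_1,…,x_d] ⊗_k k[y_1,…,y_n]` bigraded as usual,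
`f_1,…,f_d ⊆ m = (x_1,…,x_d)B` a bihomogeneous `B`-regular sequence with
`bideg f_i = (α_i, β_i)`, `S = B/(f_1,…,f_d)`, `δ = (Σα_i) − d`, `τ = Σβ_i` and
`A = H⁰_m(S)`:  `A_i = 0` for `i < 0` and `i > δ`, and there is a graded isomorphism
of `T`-modules `A_δ ≅ T(−τ)`.
-/

open MvPolynomial

noncomputable section

namespace Stmt3

variable (k : Type) [Field k] (d n : ℕ)

/-- `B = R ⊗_k T = k[x_1,…,x_d,y_1,…,y_n]`. -/
abbrev B := MvPolynomial (Fin d ⊕ Fin n) k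

/-- `T = k[y_1,…,y_n]`. -/
abbrev T := MvPolynomial (Fin n) k

/-- `B` is a `T`-algebra via `y_j ↦ y_j`. -/
instance : Algebra (T k n) (B k d n) :=
  ((rename Sum.inr : T k n →ₐ[k] B k d n).toRingHom).toAlgebra

/-- The bigrading weight: `bideg x_i = (1,0)`, `bideg y_j = (0,1)`. -/
def bwt : (Fin d ⊕ Fin n) → ℕ × ℕ := Sum.elim (fun _ => (1, 0)) (fun _ => (0, 1))

/-- The `x`-degree weight. -/
def wx : (Fin d ⊕ Fin n) → ℕ := Sum.elim (fun _ => 1) (fun _ => 0)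

/-- The ideal `m = (x_1,…,x_d)B`. -/
def mxB : Ideal (B k d n) := Ideal.span (Set.range fun i : Fin d => (X (Sum.inl i) : B k d n))

variable (I : Ideal (B k d n))

/-- `A = H⁰_m(S)`: elements of `S = B/I` annihilated by a power of `m`. -/
def H0 : Submodule (B k d n) (B k d n ⧸ I) :=
  ⨆ N : ℕ, Submodule.torsionBySet (B k d n) (B k d n ⧸ I)
    ((mxB k d n ^ N : Ideal (B k d n)) : Set (B k d n))

/-- The bigraded component of `S = B/I` in bidegree `p`. -/
def Scomp (p : ℕ × ℕ) : Submodule k (B k d n ⧸ I) :=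
  (weightedHomogeneousSubmodule k (bwt d n) p).map (Ideal.Quotient.mkₐ k I).toLinearMap

/-- The graded strand `S_j = ⊕_b S_{(j,b)}` of `S` in `x`-degree `j`, as a `T`-module. -/
def SxDeg (j : ℕ) : Submodule (T k n) (B k d n ⧸ I) :=
  Submodule.span (T k n) ((Ideal.Quotient.mk I) '' {g : B k d n | g.IsWeightedHomogeneous (wx d n) j})

/-- The graded strand of `S` in (possibly negative) `x`-degree `i : ℤ`. -/
def SxDegZ (i : ℤ) : Submodule (T k n) (B k d n ⧸ I) :=
  if 0 ≤ i then SxDeg k d n I i.toNat else ⊥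

/-- The graded strand `A_i = ⊕_b A_{(i,b)}` of `A = H⁰_m(S)`, as a `T`-module. -/
def AcompZ (i : ℤ) : Submodule (T k n) (B k d n ⧸ I) :=
  (H0 k d n I).restrictScalars (T k n) ⊓ SxDegZ k d n I i

/-- The graded component of `T` in (possibly negative) degree `j`. -/
def TcompZ (j : ℤ) : Submodule k (T k n) :=
  if 0 ≤ j then homogeneousSubmodule (Fin n) k j.toNat else ⊥

/-!
Call `s` a socle generator modulo `J` if `r ↦ r * s` induces an isomorphism from `B/m` onto the
annihilator of `m` in `B/J`. If `b * s ≡ a * t` modulo `J` with `a`, `b` nonzerodivisors on `B/J`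
lying in `m`, then `s` is a socle generator modulo `J + (a)` if and only if `t` is one modulo
`J + (b)`. Prime avoidance yields a homogeneous `b ∈ m` regular modulo all the initial segments of
two given regular sequences in `m` of the same length, so by induction socle generators are
transported from one sequence to the other, the degree changing by the difference of the degree
sums. Starting from the generator `1` for `x_1,…,x_d`, this gives a socle generator `s` of bidegree
`(δ, τ)` for `f_1,…,f_d`.

As elements of positive `x`-degree lie in `m`, the socle vanishes in `x`-degrees above `δ`. Hence an
element of `A` of `x`-degree at least `δ` lies in the socle, so `A_i = 0` for `i > δ`, while `A_δ`
is free over `T = B/m` on the class of `s`.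
-/

section PrimeAvoidance

variable {R : Type*} [CommRing R]

theorem exists_mem_notMem_forall_mem {S : Subsemigroup R} {q : Ideal R} (hq : q.IsPrime)
    (hSq : ∃ u ∈ S, u ∉ q) (Q : Finset (Ideal R)) (hQ : ∀ p ∈ Q, ∃ u ∈ S, u ∈ p ∧ u ∉ q) :
    ∃ c ∈ S, c ∉ q ∧ ∀ p ∈ Q, c ∈ p := by
  classical
  induction Q using Finset.induction_on with
  | empty => simpa using hSq
  | insert p Q _ ih =>
    obtain ⟨c, hcS, hcq, hcQ⟩ := ih fun p' hp' => hQ p' (Finset.mem_insert_of_mem hp')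
    obtain ⟨u, huS, hup, huq⟩ := hQ p (Finset.mem_insert_self p Q)
    refine ⟨u * c, S.mul_mem huS hcS, hq.mul_notMem huq hcq, ?_⟩
    simpa [p.mul_mem_right c hup] using fun p' hp' => p'.mul_mem_left u (hcQ p' hp')

-- Homogeneous elements of different degrees can be added only after passing to powers.
theorem exists_mem_forall_notMem_of_pow_add_pow_mem {S : Subsemigroup R}
    (hne : (S : Set R).Nonempty)
    (hadd : ∀ b ∈ S, ∀ c ∈ S, ∃ i ≠ 0, ∃ j ≠ 0, b ^ i + c ^ j ∈ S)
    (P : Finset (Ideal R)) (hprime : ∀ p ∈ P, p.IsPrime) (hP : ∀ p ∈ P, ∃ u ∈ S, u ∉ p) :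
    ∃ b ∈ S, ∀ p ∈ P, b ∉ p := by
  classical
  induction P using Finset.strongInduction with
  | H P ih =>
    have ih_erase (p) (hp : p ∈ P) : ∃ b ∈ S, ∀ p' ∈ P.erase p, b ∉ p' :=
      ih _ (Finset.erase_ssubset hp) (fun p' h => hprime p' (Finset.mem_of_mem_erase h))
        fun p' h => hP p' (Finset.mem_of_mem_erase h)
    obtain rfl | ⟨q, hq⟩ := P.eq_empty_or_nonempty
    · exact hne.imp fun b hb => ⟨hb, by simp⟩
    by_cases hredundant : ∃ p ∈ P.erase q, ∀ u ∈ S, u ∈ p → u ∈ q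
    · obtain ⟨p, hp, hpq⟩ := hredundant
      have hpP := Finset.mem_of_mem_erase hp
      obtain ⟨b, hbS, hb⟩ := ih_erase p hpP
      have hbq : b ∉ q := hb q (Finset.mem_erase.2 ⟨(Finset.ne_of_mem_erase hp).symm, hq⟩)
      refine ⟨b, hbS, fun p' hp' => ?_⟩
      obtain rfl | hne' := eq_or_ne p' p
      · exact fun hbp => hbq (hpq b hbS hbp)
      · exact hb p' (Finset.mem_erase.2 ⟨hne', hp'⟩)
    · push Not at hredundant
      obtain ⟨b, hbS, hb⟩ := ih_erase q hq
      by_cases hbq : b ∈ q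
      · obtain ⟨c, hcS, hcq, hcP⟩ :=
          exists_mem_notMem_forall_mem (hprime q hq) (hP q hq) _ hredundant
        obtain ⟨i, hi, j, hj, hij⟩ := hadd b hbS c hcS
        refine ⟨b ^ i + c ^ j, hij, fun p hp => ?_⟩
        obtain rfl | hpq := eq_or_ne p q
        · rw [Ideal.add_mem_iff_right _ (p.pow_mem_of_mem hbq i hi.bot_lt)]
          exact fun h => hcq ((hprime p hp).mem_of_pow_mem j h)
        · have hp' := Finset.mem_erase.2 ⟨hpq, hp⟩
          rw [Ideal.add_mem_iff_left _ (p.pow_mem_of_mem (hcP p hp') j hj.bot_lt)]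
          exact fun h => hb p hp' ((hprime p hp).mem_of_pow_mem i h)
      · refine ⟨b, hbS, fun p hp => ?_⟩
        obtain rfl | hpq := eq_or_ne p q
        · exact hbq
        · exact hb p (Finset.mem_erase.2 ⟨hpq, hp⟩)

theorem isSMulRegular_iff_forall_associatedPrimes_notMem [IsNoetherianRing R] {M : Type*}
    [AddCommGroup M] [Module R M] {r : R} :
    IsSMulRegular M r ↔ ∀ p ∈ associatedPrimes R M, r ∉ p := by
  have h := Set.ext_iff.1 (biUnion_associatedPrimes_eq_compl_regular R M) r
  simp only [Set.mem_iUnion, SetLike.mem_coe, Set.mem_compl_iff, Set.mem_ofPred_eq] at h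
  simpa using not_congr h.symm

end PrimeAvoidance

section HomogeneousPrimeAvoidance

variable {R σ G : Type*} [CommRing R] [SetLike σ R] [AddSubmonoidClass σ R] [AddMonoid G]
  (𝒜 : G → σ) [SetLike.GradedMonoid 𝒜]

/-- The homogeneous elements of the ideal `J` whose degree is a positive multiple of `e`. -/
def homogeneousSubsemigroup (J : Ideal R) (e : G) : Subsemigroup R where
  carrier := {b | b ∈ J ∧ ∃ i : ℕ, i ≠ 0 ∧ b ∈ 𝒜 (i • e)}
  mul_mem' := by
    rintro b c ⟨hb, i, hi, hbi⟩ ⟨-, j, -, hcj⟩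
    exact ⟨J.mul_mem_right c hb, i + j, by omega, add_nsmul e i j ▸ SetLike.mul_mem_graded hbi hcj⟩

theorem pow_add_pow_mem_homogeneousSubsemigroup {J : Ideal R} {e : G} {b c : R}
    (hb : b ∈ homogeneousSubsemigroup 𝒜 J e) (hc : c ∈ homogeneousSubsemigroup 𝒜 J e) :
    ∃ i ≠ 0, ∃ j ≠ 0, b ^ i + c ^ j ∈ homogeneousSubsemigroup 𝒜 J e := by
  obtain ⟨hbJ, i, hi, hbi⟩ := hb
  obtain ⟨hcJ, j, hj, hcj⟩ := hc
  have hbpow : b ^ j ∈ 𝒜 ((j * i) • e) := mul_nsmul' e j i ▸ SetLike.pow_mem_graded j hbi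
  have hcpow : c ^ i ∈ 𝒜 ((j * i) • e) := mul_nsmul e j i ▸ SetLike.pow_mem_graded i hcj
  exact ⟨j, hj, i, hi,
    J.add_mem (J.pow_mem_of_mem hbJ j hj.bot_lt) (J.pow_mem_of_mem hcJ i hi.bot_lt),
    j * i, mul_ne_zero hj hi, add_mem hbpow hcpow⟩

theorem exists_homogeneous_forall_notMem {X : Set R} {e : G} (hX : ∀ x ∈ X, x ∈ 𝒜 e)
    (P : Finset (Ideal R)) (hprime : ∀ p ∈ P, p.IsPrime) (hP : ∀ p ∈ P, ¬Ideal.span X ≤ p) :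
    ∃ b ∈ Ideal.span X, (∃ i : ℕ, b ∈ 𝒜 (i • e)) ∧ ∀ p ∈ P, b ∉ p := by
  have hXS (x) (hx : x ∈ X) : x ∈ homogeneousSubsemigroup 𝒜 (Ideal.span X) e :=
    ⟨Ideal.subset_span hx, 1, one_ne_zero, (one_nsmul e).symm ▸ hX x hx⟩
  have hP' : ∀ p ∈ P, ∃ u ∈ homogeneousSubsemigroup 𝒜 (Ideal.span X) e, u ∉ p := by
    intro p hp
    obtain ⟨x, hx, hxp⟩ := Set.not_subset.1 (mt Ideal.span_le.2 (hP p hp))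
    exact ⟨x, hXS x hx, hxp⟩
  obtain ⟨b, ⟨hbX, i, -, hbi⟩, hbP⟩ := exists_mem_forall_notMem_of_pow_add_pow_mem
    (S := homogeneousSubsemigroup 𝒜 (Ideal.span X) e) ⟨0, zero_mem _, 1, one_ne_zero, zero_mem _⟩
    (fun b hb c hc => pow_add_pow_mem_homogeneousSubsemigroup 𝒜 hb hc) P hprime hP'
  exact ⟨b, hbX, ⟨i, hbi⟩, hbP⟩

theorem exists_homogeneous_forall_isSMulRegular [IsNoetherianRing R] {ι : Type*} [Finite ι]
    {M : ι → Type*} [∀ l, AddCommGroup (M l)] [∀ l, Module R (M l)] [∀ l, Module.Finite R (M l)]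
    {X : Set R} {e : G} (hX : ∀ x ∈ X, x ∈ 𝒜 e)
    (hM : ∀ l, ∃ r ∈ Ideal.span X, IsSMulRegular (M l) r) :
    ∃ b ∈ Ideal.span X, (∃ i : ℕ, b ∈ 𝒜 (i • e)) ∧ ∀ l, IsSMulRegular (M l) b := by
  have hfin : (⋃ l, associatedPrimes R (M l)).Finite :=
    Set.finite_iUnion fun l => associatedPrimes.finite R (M l)
  obtain ⟨b, hbX, hb, hbP⟩ := exists_homogeneous_forall_notMem 𝒜 hX hfin.toFinset
    (by simpa using fun p l (hp : p ∈ associatedPrimes R (M l)) => hp.isPrime) (by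
      simp only [Set.Finite.mem_toFinset, Set.mem_iUnion]
      rintro p ⟨l, hp⟩ hXp
      obtain ⟨r, hr, hreg⟩ := hM l
      exact isSMulRegular_iff_forall_associatedPrimes_notMem.1 hreg p hp (hXp hr))
  exact ⟨b, hbX, hb, fun l => isSMulRegular_iff_forall_associatedPrimes_notMem.2 fun p hp =>
    hbP p (hfin.mem_toFinset.2 (Set.mem_iUnion_of_mem l hp))⟩

end HomogeneousPrimeAvoidance

section Exchange

variable {R : Type*} [CommRing R] {J m : Ideal R} {a b u v : R}

theorem mem_sup_span_singleton_iff {x : R} :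
    x ∈ J ⊔ Ideal.span {a} ↔ ∃ r, x - r * a ∈ J := by
  simp only [sup_comm J, Ideal.mem_span_singleton_sup]
  exact exists_congr fun r => ⟨fun ⟨y, hy, h⟩ => by simpa [← h], fun h => ⟨_, h, by ring⟩⟩

theorem mem_sup_span_singleton_of_mem_sup_span_singleton (ha : IsSMulRegular (R ⧸ J) a)
    (huv : b * u - a * v ∈ J) (hu : u ∈ J ⊔ Ideal.span {a}) : v ∈ J ⊔ Ideal.span {b} := by
  obtain ⟨r, hr⟩ := mem_sup_span_singleton_iff.1 hu
  have hav : a * (v - r * b) ∈ J := by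
    convert J.sub_mem (J.mul_mem_left b hr) huv using 1
    ring
  exact mem_sup_span_singleton_iff.2 ⟨r, mem_of_isSMulRegular_quotient_of_smul_mem ha hav⟩

theorem isSMulRegular_quotient_sup_span_singleton_swap (ha : IsSMulRegular (R ⧸ J) a)
    (hb : IsSMulRegular (R ⧸ J ⊔ Ideal.span {a}) b) :
    IsSMulRegular (R ⧸ J ⊔ Ideal.span {b}) a := by
  refine (isSMulRegular_quotient_iff_mem_of_smul_mem _ _).2 fun v hv => ?_
  obtain ⟨u, hu⟩ := mem_sup_span_singleton_iff.1 hv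
  have huv : b * u - a * v ∈ J := by
    convert J.neg_mem hu using 1
    rw [smul_eq_mul]
    ring
  have hbu : b • u ∈ J ⊔ Ideal.span {a} := by
    refine mem_sup_span_singleton_iff.2 ⟨v, ?_⟩
    rwa [mul_comm v, smul_eq_mul]
  exact mem_sup_span_singleton_of_mem_sup_span_singleton ha huv
    (mem_of_isSMulRegular_quotient_of_smul_mem hb hbu)

/-- The class of `s` freely generates the socle `{u | m * u = 0}` of `R ⧸ J` over `R ⧸ m`. -/
structure IsSocleGenerator (m J : Ideal R) (s : R) : Prop where
  mul_mem_iff : ∀ r, r * s ∈ J ↔ r ∈ m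
  exists_sub_mul_mem : ∀ u, (∀ c ∈ m, c * u ∈ J) → ∃ r, u - r * s ∈ J

theorem isSocleGenerator_one (m : Ideal R) : IsSocleGenerator m m 1 where
  mul_mem_iff r := by rw [mul_one]
  exists_sub_mul_mem u _ := ⟨u, by simp⟩

theorem IsSocleGenerator.exchange {s t : R} (ha : IsSMulRegular (R ⧸ J) a)
    (hb : IsSMulRegular (R ⧸ J) b) (hbm : b ∈ m)
    (ht : IsSocleGenerator m (J ⊔ Ideal.span {b}) t) (hst : b * s - a * t ∈ J) :
    IsSocleGenerator m (J ⊔ Ideal.span {a}) s where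
  mul_mem_iff r := by
    have hrst : b * (r * s) - a * (r * t) ∈ J := by
      convert J.mul_mem_left r hst using 1
      ring
    have hrts : a * (r * t) - b * (r * s) ∈ J := by simpa using J.neg_mem hrst
    rw [← ht.mul_mem_iff]
    exact ⟨mem_sup_span_singleton_of_mem_sup_span_singleton ha hrst,
      mem_sup_span_singleton_of_mem_sup_span_singleton hb hrts⟩
  exists_sub_mul_mem u hu := by
    obtain ⟨v, hv⟩ := mem_sup_span_singleton_iff.1 (hu b hbm)
    have hcv : ∀ c ∈ m, c * v ∈ J ⊔ Ideal.span {b} := fun c hc => by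
      refine mem_sup_span_singleton_of_mem_sup_span_singleton ha ?_ (hu c hc)
      convert J.mul_mem_left c hv using 1
      ring
    obtain ⟨r, hr⟩ := ht.exists_sub_mul_mem v hcv
    refine ⟨r, mem_sup_span_singleton_of_mem_sup_span_singleton hb ?_ hr⟩
    convert J.sub_mem (J.mul_mem_left r hst) hv using 1
    ring

end Exchange

section GradedExchange

theorem isHomogeneous_span_range {R σ G ι : Type*} [Semiring R] [SetLike σ R]
    [AddSubmonoidClass σ R] [AddMonoid G] [DecidableEq G] {𝒜 : G → σ} [GradedRing 𝒜] {a : ι → R}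
    {p : ι → G} (ha : ∀ i, a i ∈ 𝒜 (p i)) : (Ideal.span (Set.range a)).IsHomogeneous 𝒜 :=
  Ideal.homogeneous_span 𝒜 _ (by rintro _ ⟨i, rfl⟩; exact ⟨p i, ha i⟩)

variable {R σ G : Type*} [CommRing R] [SetLike σ R] [AddSubgroupClass σ R] [AddCommGroup G]
  [DecidableEq G] {𝒜 : G → σ} [GradedRing 𝒜] {J m : Ideal R} {a b : R}

theorem exists_mem_sub_mul_mem_of_isHomogeneous (hJ : J.IsHomogeneous 𝒜) {g p : G} {u r : R}
    (ha : a ∈ 𝒜 p) (hu : u ∈ 𝒜 g) (hur : u - r * a ∈ J) :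
    ∃ r' ∈ 𝒜 (g - p), u - r' * a ∈ J := by
  refine ⟨DirectSum.decompose 𝒜 r (g - p), SetLike.coe_mem _, ?_⟩
  have hmul := DirectSum.coe_decompose_mul_add_of_right_mem 𝒜 (a := r) (i := g - p) ha
  have hcomp := hJ g hur
  rw [sub_add_cancel] at hmul
  rwa [DirectSum.decompose_sub, DirectSum.sub_apply, AddSubgroupClass.coe_sub, hmul,
    DirectSum.decompose_of_mem_same 𝒜 hu] at hcomp

theorem IsSocleGenerator.exists_exchange (hJ : J.IsHomogeneous 𝒜) {g p q : G} {t : R}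
    (ha : a ∈ 𝒜 p) (hb : b ∈ 𝒜 q) (hareg : IsSMulRegular (R ⧸ J) a)
    (hbreg : IsSMulRegular (R ⧸ J) b) (ham : a ∈ m) (hbm : b ∈ m) (ht : t ∈ 𝒜 g)
    (hgen : IsSocleGenerator m (J ⊔ Ideal.span {b}) t) :
    ∃ s ∈ 𝒜 (g + p - q), IsSocleGenerator m (J ⊔ Ideal.span {a}) s := by
  obtain ⟨r, hr⟩ := mem_sup_span_singleton_iff.1 ((hgen.mul_mem_iff a).2 ham)
  obtain ⟨s, hs, hst⟩ :=
    exists_mem_sub_mul_mem_of_isHomogeneous hJ hb (SetLike.mul_mem_graded ha ht) hr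
  refine ⟨s, add_comm p g ▸ hs, hgen.exchange hareg hbreg hbm ?_⟩
  convert J.neg_mem hst using 1
  ring

end GradedExchange

section RegularSequence

variable {R : Type*} [CommRing R]

theorem image_init_Iio {α : Type*} {N : ℕ} (a : Fin (N + 1) → α) (i : Fin N) :
    Fin.init a '' Set.Iio i = a '' Set.Iio i.castSucc := by
  rw [← Fin.image_castSucc_Iio, Set.image_image]
  rfl

theorem range_init {α : Type*} {N : ℕ} (a : Fin (N + 1) → α) :
    Set.range (Fin.init a) = a '' Set.Iio (Fin.last N) := by
  have hIio : Set.range Fin.castSucc = Set.Iio (Fin.last N) := by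
    ext i
    exact Fin.exists_castSucc_eq.trans Fin.lt_last_iff_ne_last.symm
  rw [← hIio, ← Set.range_comp]
  rfl

theorem isSMulRegular_quotient_span_image_Iio {N : ℕ} {f : Fin N → R}
    (hf : RingTheory.Sequence.IsWeaklyRegular R (List.ofFn f)) (i : Fin N) :
    IsSMulRegular (R ⧸ Ideal.span (f '' Set.Iio i)) (f i) := by
  have hprefix : Ideal.ofList ((List.ofFn f).take i) = Ideal.span (f '' Set.Iio i) := by
    unfold Ideal.ofList
    congr 1
    ext x
    simp only [List.mem_take_iff_getElem, List.getElem_ofFn, List.length_ofFn, Fin.is_le',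
      inf_of_le_left, Set.mem_ofPred_eq, Set.mem_image, Set.mem_Iio, Fin.exists_iff]
    exact ⟨fun ⟨j, hj, h⟩ => ⟨j, hj.trans i.2, hj, h⟩, fun ⟨j, _, hj, h⟩ => ⟨j, hj, h⟩⟩
  have hreg := hf.regular_mod_prev i (by simp)
  rwa [smul_eq_mul, Ideal.mul_top, hprefix, List.getElem_ofFn] at hreg

theorem sup_span_image_Iio_succ {N : ℕ} (J : Ideal R)
    (a : Fin (N + 1) → R) (i : Fin N) :
    J ⊔ Ideal.span (a '' Set.Iio i.succ) =
      J ⊔ Ideal.span (a '' Set.Iio i.castSucc) ⊔ Ideal.span {a i.castSucc} := by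
  have hIio : Set.Iio i.succ = insert i.castSucc (Set.Iio i.castSucc) := by
    ext j
    simp only [Set.mem_Iio, Set.mem_insert_iff, Fin.lt_def, Fin.ext_iff, Fin.val_succ,
      Fin.val_castSucc]
    omega
  rw [hIio, Set.image_insert_eq, Ideal.span_insert, sup_comm (Ideal.span {_}), sup_assoc]

theorem sup_span_range_eq_sup_init {N : ℕ} (J : Ideal R)
    (a : Fin (N + 1) → R) :
    J ⊔ Ideal.span (Set.range a) =
      J ⊔ Ideal.span (Set.range (Fin.init a)) ⊔ Ideal.span {a (Fin.last N)} := by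
  rw [sup_assoc, ← Ideal.span_union, Set.union_singleton, ← Fin.range_snoc, Fin.snoc_init_self]

variable {σ G : Type*} [SetLike σ R]

/-- `a` is a sequence in `m` which is weakly regular on `R ⧸ J` and whose members are homogeneous
of degrees `p`. -/
structure IsHomogeneousRegularMod (𝒜 : G → σ) (m J : Ideal R) {N : ℕ} (a : Fin N → R)
    (p : Fin N → G) : Prop where
  homogeneous : ∀ i, a i ∈ 𝒜 (p i)
  mem : ∀ i, a i ∈ m
  isSMulRegular : ∀ i, IsSMulRegular (R ⧸ J ⊔ Ideal.span (a '' Set.Iio i)) (a i)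

variable {𝒜 : G → σ} {m J : Ideal R} {N : ℕ}

theorem IsHomogeneousRegularMod.init_sup_span_singleton {a : Fin (N + 1) → R} {p : Fin (N + 1) → G}
    (ha : IsHomogeneousRegularMod 𝒜 m J a p) {b : R}
    (hb : ∀ i, IsSMulRegular (R ⧸ J ⊔ Ideal.span (a '' Set.Iio i)) b) :
    IsHomogeneousRegularMod 𝒜 m (J ⊔ Ideal.span {b}) (Fin.init a) (Fin.init p) where
  homogeneous i := ha.homogeneous i.castSucc
  mem i := ha.mem i.castSucc
  isSMulRegular i := by
    have hbi := hb i.succ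
    rw [sup_span_image_Iio_succ] at hbi
    rw [image_init_Iio, sup_right_comm]
    exact isSMulRegular_quotient_sup_span_singleton_swap (ha.isSMulRegular i.castSucc) hbi

theorem exists_homogeneous_isSMulRegular_of_isHomogeneousRegularMod [IsNoetherianRing R]
    [AddSubmonoidClass σ R] [AddMonoid G] [SetLike.GradedMonoid 𝒜] {X : Set R} {e : G}
    (hX : ∀ x ∈ X, x ∈ 𝒜 e) {a c : Fin N → R} {p q : Fin N → G}
    (ha : IsHomogeneousRegularMod 𝒜 (Ideal.span X) J a p)
    (hc : IsHomogeneousRegularMod 𝒜 (Ideal.span X) J c q) :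
    ∃ b ∈ Ideal.span X, (∃ i : ℕ, b ∈ 𝒜 (i • e)) ∧
      (∀ i, IsSMulRegular (R ⧸ J ⊔ Ideal.span (a '' Set.Iio i)) b) ∧
      ∀ i, IsSMulRegular (R ⧸ J ⊔ Ideal.span (c '' Set.Iio i)) b := by
  let K : Fin N ⊕ Fin N → Ideal R := Sum.elim (fun i => J ⊔ Ideal.span (a '' Set.Iio i))
    (fun i => J ⊔ Ideal.span (c '' Set.Iio i))
  obtain ⟨b, hbX, hb, hbK⟩ := exists_homogeneous_forall_isSMulRegular 𝒜 (M := fun l => R ⧸ K l) hX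
    (Sum.forall.2 ⟨fun i => ⟨a i, ha.mem i, ha.isSMulRegular i⟩,
      fun i => ⟨c i, hc.mem i, hc.isSMulRegular i⟩⟩)
  exact ⟨b, hbX, hb, fun i => hbK (.inl i), fun i => hbK (.inr i)⟩

theorem exists_isSocleGenerator [IsNoetherianRing R] [AddSubgroupClass σ R] [AddCommGroup G]
    [DecidableEq G] [GradedRing 𝒜] {X : Set R} {e : G} (hX : ∀ x ∈ X, x ∈ 𝒜 e)
    (hJ : J.IsHomogeneous 𝒜) {a c : Fin N → R} {p q : Fin N → G}
    (ha : IsHomogeneousRegularMod 𝒜 (Ideal.span X) J a p)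
    (hc : IsHomogeneousRegularMod 𝒜 (Ideal.span X) J c q) {g : G} {t : R} (ht : t ∈ 𝒜 g)
    (hgen : IsSocleGenerator (Ideal.span X) (J ⊔ Ideal.span (Set.range c)) t) :
    ∃ s ∈ 𝒜 (g + ∑ i, p i - ∑ i, q i),
      IsSocleGenerator (Ideal.span X) (J ⊔ Ideal.span (Set.range a)) s := by
  induction N generalizing J g t with
  | zero => exact ⟨t, by simpa using ht, by simpa using hgen⟩
  | succ N ih =>
    -- Exchange the last `c` for `b`, the other `c`s for the other `a`s, then `b` for the last `a`.
    obtain ⟨b, hbX, ⟨i, hbi⟩, hba, hbc⟩ :=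
      exists_homogeneous_isSMulRegular_of_isHomogeneousRegularMod hX ha hc
    have ha' := ha.init_sup_span_singleton hba
    have hc' := hc.init_sup_span_singleton hbc
    have halast := ha.isSMulRegular (Fin.last N)
    have hclast := hc.isSMulRegular (Fin.last N)
    replace hba := hba (Fin.last N)
    replace hbc := hbc (Fin.last N)
    rw [← range_init] at halast hclast hba hbc
    rw [sup_span_range_eq_sup_init] at hgen ⊢
    obtain ⟨t₁, ht₁, hgen₁⟩ := hgen.exists_exchange
      (hJ.sup (isHomogeneous_span_range hc'.homogeneous)) hbi (hc.homogeneous (Fin.last N))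
      hbc hclast hbX (hc.mem (Fin.last N)) ht
    rw [sup_right_comm] at hgen₁
    obtain ⟨t₂, ht₂, hgen₂⟩ := ih
      (hJ.sup (Ideal.homogeneous_span 𝒜 {b} (by rintro _ rfl; exact ⟨_, hbi⟩))) ha' hc' ht₁ hgen₁
    rw [sup_right_comm] at hgen₂
    obtain ⟨s, hs, hsgen⟩ := hgen₂.exists_exchange
      (hJ.sup (isHomogeneous_span_range ha'.homogeneous)) (ha.homogeneous (Fin.last N)) hbi
      halast hba (ha.mem (Fin.last N)) hbX ht₂
    refine ⟨s, ?_, hsgen⟩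
    convert hs using 2
    simp only [Fin.sum_univ_castSucc, Fin.init]
    abel

end RegularSequence

section Vanishing

variable {R σ G : Type*} [CommRing R] [SetLike σ R] [AddSubgroupClass σ R] [AddCommGroup G]
  [PartialOrder G] [IsOrderedAddMonoid G] [DecidableEq G] {𝒜 : G → σ} [GradedRing 𝒜] {J : Ideal R}

theorem IsSocleGenerator.mem_of_forall_mul_mem {m : Ideal R} {s u : R} {g h : G}
    (hgen : IsSocleGenerator m J s) (hJ : J.IsHomogeneous 𝒜) (hs : s ∈ 𝒜 g)
    (hm : ∀ i > 0, ∀ r ∈ 𝒜 i, r ∈ m) (hgh : g < h) (hu : u ∈ 𝒜 h) (hmu : ∀ c ∈ m, c * u ∈ J) :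
    u ∈ J := by
  obtain ⟨r, hr⟩ := hgen.exists_sub_mul_mem u hmu
  obtain ⟨r', hr', hur'⟩ := exists_mem_sub_mul_mem_of_isHomogeneous hJ hs hu hr
  have hr's : r' * s ∈ J := (hgen.mul_mem_iff r').2 (hm _ (sub_pos.2 hgh) r' hr')
  exact (Submodule.sub_mem_iff_left J hr's).1 hur'

theorem IsSocleGenerator.mul_mem_of_pow_mul_mem {X : Set R} (hX : ∀ x ∈ X, ∃ i > 0, x ∈ 𝒜 i)
    {s : R} {g : G} (hgen : IsSocleGenerator (Ideal.span X) J s) (hJ : J.IsHomogeneous 𝒜)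
    (hs : s ∈ 𝒜 g) (hm : ∀ i > 0, ∀ r ∈ 𝒜 i, r ∈ Ideal.span X) {N : ℕ} {u : R} {h : G}
    (hgh : g ≤ h) (hu : u ∈ 𝒜 h) (hN : ∀ c ∈ Ideal.span X ^ N, c * u ∈ J) :
    ∀ c ∈ Ideal.span X, c * u ∈ J := by
  induction N generalizing u h with
  | zero => exact fun c _ => J.mul_mem_left c (by simpa using hN 1)
  | succ N ih =>
    have hXu : X ⊆ Submodule.colon J {u} := fun x hx => Submodule.mem_colon_singleton.2 <| by
      obtain ⟨i, hi, hxi⟩ := hX x hx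
      have hxu : x * u ∈ 𝒜 (i + h) := SetLike.mul_mem_graded hxi hu
      have hlt : g < i + h := hgh.trans_lt (lt_add_of_pos_left h hi)
      refine hgen.mem_of_forall_mul_mem hJ hs hm hlt hxu (ih hlt.le hxu fun c hc => ?_)
      rw [smul_eq_mul, ← mul_assoc]
      exact hN _ (pow_succ (Ideal.span X) N ▸ Ideal.mul_mem_mul hc (Ideal.subset_span hx))
    exact fun c hc => Submodule.mem_colon_singleton.1 (Ideal.span_le.2 hXu hc)

end Vanishing

section Weights

variable {σ τ R M M' : Type*} [CommSemiring R] [AddCommMonoid M] [AddCommMonoid M']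
  {φ : MvPolynomial σ R}

theorem weight_addMonoidHom_comp (g : M →+ M') (w : σ → M) (c : σ →₀ ℕ) :
    Finsupp.weight (g ∘ w) c = g (Finsupp.weight w c) := by
  simp [Finsupp.weight_apply, Finsupp.sum, map_sum]

theorem isWeightedHomogeneous_addMonoidHom_comp (g : M →+ M') {w : σ → M} {m : M}
    (hφ : IsWeightedHomogeneous w φ m) : IsWeightedHomogeneous (g ∘ w) φ (g m) := fun c hc => by
  rw [weight_addMonoidHom_comp, hφ hc]

theorem isWeightedHomogeneous_addMonoidHom_comp_iff {g : M →+ M'} (hg : Function.Injective g)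
    {w : σ → M} {m : M} :
    IsWeightedHomogeneous (g ∘ w) φ (g m) ↔ IsWeightedHomogeneous w φ m :=
  ⟨fun hφ c hc => hg (weight_addMonoidHom_comp g w c ▸ hφ hc),
    isWeightedHomogeneous_addMonoidHom_comp g⟩

theorem nonneg_of_isWeightedHomogeneous [PartialOrder M] [IsOrderedAddMonoid M] {w : σ → M} {m : M}
    (hw : ∀ i, 0 ≤ w i) (hφ : IsWeightedHomogeneous w φ m) (hne : φ ≠ 0) : 0 ≤ m := by
  obtain ⟨c, hc⟩ := ne_zero_iff.1 hne
  rw [← hφ hc, Finsupp.weight_apply]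
  exact Finset.sum_nonneg fun i _ => nsmul_nonneg (hw i) (c i)

theorem weight_mapDomain (w : τ → M) (f : σ → τ) (c : σ →₀ ℕ) :
    Finsupp.weight w (c.mapDomain f) = Finsupp.weight (w ∘ f) c := by
  simp only [Finsupp.weight_apply]
  exact Finsupp.sum_mapDomain_index (by simp) (by simp [add_smul])

theorem isWeightedHomogeneous_rename {w : τ → M} {m : M} {f : σ → τ}
    (hφ : IsWeightedHomogeneous (w ∘ f) φ m) : IsWeightedHomogeneous w (rename f φ) m :=
  fun c hc => by
    obtain ⟨c', rfl, hc'⟩ := coeff_rename_ne_zero f φ c hc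
    rw [weight_mapDomain, hφ hc']

theorem isWeightedHomogeneous_killCompl {w : τ → M} {m : M} {f : σ → τ} (hf : Function.Injective f)
    {ψ : MvPolynomial τ R} (hψ : IsWeightedHomogeneous w ψ m) :
    IsWeightedHomogeneous (w ∘ f) (killCompl hf ψ) m := fun c hc => by
  rw [coeff_killCompl] at hc
  rw [← weight_mapDomain, hψ hc]

theorem killCompl_eq_zero_iff {f : σ → τ} (hf : Function.Injective f) {ψ : MvPolynomial τ R} :
    killCompl hf ψ = 0 ↔ ψ ∈ Ideal.span (X '' (Set.range f)ᶜ) := by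
  rw [mem_ideal_span_X_image]
  refine ⟨fun h c hc => ?_, fun h => ?_⟩
  · by_contra! hvanish
    have hrange : ↑c.support ⊆ Set.range f := fun i hi =>
      by_contra fun hir => Finsupp.mem_support_iff.1 hi (hvanish i hir)
    rw [mem_support_iff, ← Finsupp.mapDomain_comapDomain f hf c hrange, ← coeff_killCompl hf, h]
      at hc
    exact hc (coeff_zero _)
  · ext c
    rw [coeff_killCompl, coeff_zero]
    by_contra hc
    obtain ⟨i, hi, hci⟩ := h _ (mem_support_iff.2 hc)
    exact hci (Finsupp.mapDomain_of_notMem_range _ _ hi)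

theorem isSMulRegular_quotient_span_X_image {S : Type*} [CommRing S] {s : Set σ} {i : σ}
    (hi : i ∉ s) :
    IsSMulRegular (MvPolynomial σ S ⧸ Ideal.span (X '' s : Set (MvPolynomial σ S)))
      (X i : MvPolynomial σ S) := by
  refine (isSMulRegular_quotient_iff_mem_of_smul_mem _ _).2 fun φ hφ => ?_
  rw [smul_eq_mul, mem_ideal_span_X_image] at hφ
  refine mem_ideal_span_X_image.2 fun c hc => ?_
  obtain ⟨j, hj, hcj⟩ := hφ (Finsupp.single i 1 + c)
    (by rwa [mem_support_iff, coeff_X_mul, ← mem_support_iff])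
  refine ⟨j, hj, ?_⟩
  rwa [Finsupp.add_apply, Finsupp.single_eq_of_ne (by rintro rfl; exact hi hj), zero_add] at hcj

end Weights

section Bigrading

/-- The bigrading weight `bwt` with values in `ℤ × ℤ`, where bidegrees can be subtracted. -/
def bwtZ : Fin d ⊕ Fin n → ℤ × ℤ := Sum.elim (fun _ => (1, 0)) (fun _ => (0, 1))

/-- The `x`-degree weight `wx` with values in `ℤ`. -/
def wxZ : Fin d ⊕ Fin n → ℤ := Sum.elim (fun _ => 1) (fun _ => 0)

variable {k d n}

theorem isWeightedHomogeneous_bwtZ_iff {φ : B k d n} {p : ℕ × ℕ} :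
    IsWeightedHomogeneous (bwtZ d n) φ ((p.1 : ℤ), (p.2 : ℤ)) ↔
      IsWeightedHomogeneous (bwt d n) φ p := by
  let g : ℕ × ℕ →+ ℤ × ℤ := (Nat.castAddMonoidHom ℤ).prodMap (Nat.castAddMonoidHom ℤ)
  have hg : Function.Injective g := Nat.cast_injective.prodMap Nat.cast_injective
  have hw : bwtZ d n = g ∘ bwt d n := by
    ext (i | i) <;> simp [bwtZ, bwt, g]
  rw [hw]
  exact isWeightedHomogeneous_addMonoidHom_comp_iff hg

theorem isWeightedHomogeneous_wxZ_iff {φ : B k d n} {j : ℕ} :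
    IsWeightedHomogeneous (wxZ d n) φ (j : ℤ) ↔ IsWeightedHomogeneous (wx d n) φ j := by
  have hw : wxZ d n = Nat.castAddMonoidHom ℤ ∘ wx d n := by
    ext (i | i) <;> simp [wxZ, wx]
  rw [hw]
  exact isWeightedHomogeneous_addMonoidHom_comp_iff Nat.cast_injective

theorem isWeightedHomogeneous_wxZ_of_bwtZ {φ : B k d n} {p : ℤ × ℤ}
    (hφ : IsWeightedHomogeneous (bwtZ d n) φ p) : IsWeightedHomogeneous (wxZ d n) φ p.1 := by
  have hw : wxZ d n = AddMonoidHom.fst ℤ ℤ ∘ bwtZ d n := by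
    ext (i | i) <;> rfl
  rw [hw]
  exact isWeightedHomogeneous_addMonoidHom_comp (AddMonoidHom.fst ℤ ℤ) hφ

theorem isWeightedHomogeneous_bwtZ_inr_iff {t : T k n} {j : ℤ} :
    IsWeightedHomogeneous (bwtZ d n ∘ Sum.inr) t (0, j) ↔
      IsWeightedHomogeneous (1 : Fin n → ℤ) t j :=
  isWeightedHomogeneous_addMonoidHom_comp_iff (g := AddMonoidHom.inr ℤ ℤ)
    (Prod.mk_right_injective 0)

theorem mem_TcompZ_iff {t : T k n} {j : ℤ} :
    t ∈ TcompZ k n j ↔ IsWeightedHomogeneous (1 : Fin n → ℤ) t j := by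
  unfold TcompZ
  split_ifs with hj
  · obtain ⟨a, rfl⟩ := Int.eq_ofNat_of_zero_le hj
    exact (isWeightedHomogeneous_addMonoidHom_comp_iff (g := Nat.castAddMonoidHom ℤ)
      Nat.cast_injective (w := (1 : Fin n → ℕ))).symm
  · rw [Submodule.mem_bot]
    refine ⟨?_, fun ht => ?_⟩
    · rintro rfl
      exact isWeightedHomogeneous_zero ..
    · by_contra hne
      exact hj (nonneg_of_isWeightedHomogeneous (fun _ => zero_le_one) ht hne)

variable (k d n) in
/-- The reduction `B → B/m = T`, setting every `x_i` to `0`. -/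
def reduceX : B k d n →ₐ[k] T k n := killCompl Sum.inr_injective

theorem reduceX_eq_zero_iff {r : B k d n} : reduceX k d n r = 0 ↔ r ∈ mxB k d n := by
  have hmxB : mxB k d n = Ideal.span (X '' (Set.range (Sum.inr : Fin n → Fin d ⊕ Fin n))ᶜ) := by
    rw [Set.compl_range_inr, ← Set.range_comp]
    rfl
  rw [hmxB, reduceX, killCompl_eq_zero_iff]

theorem reduceX_algebraMap (t : T k n) : reduceX k d n (algebraMap (T k n) (B k d n) t) = t :=
  killCompl_rename_app Sum.inr_injective t

theorem sub_algebraMap_reduceX_mem_mxB (r : B k d n) :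
    r - algebraMap (T k n) (B k d n) (reduceX k d n r) ∈ mxB k d n := by
  rw [← reduceX_eq_zero_iff, map_sub, reduceX_algebraMap, sub_self]

theorem algebraMap_mem_mxB_iff {t : T k n} :
    algebraMap (T k n) (B k d n) t ∈ mxB k d n ↔ t = 0 := by
  rw [← reduceX_eq_zero_iff, reduceX_algebraMap]

theorem isWeightedHomogeneous_bwtZ_algebraMap {t : T k n} {j : ℤ} (ht : t ∈ TcompZ k n j) :
    IsWeightedHomogeneous (bwtZ d n) (algebraMap (T k n) (B k d n) t) (0, j) :=
  isWeightedHomogeneous_rename (isWeightedHomogeneous_bwtZ_inr_iff.2 (mem_TcompZ_iff.1 ht))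

theorem isWeightedHomogeneous_wxZ_algebraMap (t : T k n) :
    IsWeightedHomogeneous (wxZ d n) (algebraMap (T k n) (B k d n) t) 0 :=
  isWeightedHomogeneous_rename fun c _ => by simp [wxZ, Finsupp.weight_apply]

theorem reduceX_mem_TcompZ {r : B k d n} {j : ℤ}
    (hr : IsWeightedHomogeneous (bwtZ d n) r (0, j)) : reduceX k d n r ∈ TcompZ k n j :=
  mem_TcompZ_iff.2 <| isWeightedHomogeneous_bwtZ_inr_iff.1 <|
    isWeightedHomogeneous_killCompl Sum.inr_injective hr

theorem mem_mxB_of_isWeightedHomogeneous_wxZ {r : B k d n} {i : ℤ} (hi : i ≠ 0)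
    (hr : IsWeightedHomogeneous (wxZ d n) r i) : r ∈ mxB k d n := by
  rw [← reduceX_eq_zero_iff]
  by_contra hne
  obtain ⟨c, hc⟩ := ne_zero_iff.1 hne
  have hweight := isWeightedHomogeneous_killCompl Sum.inr_injective hr hc
  exact hi (by simpa [wxZ, Finsupp.weight_apply] using hweight.symm)

end Bigrading

section SocleGenerator

variable {k d n}

attribute [local instance] weightedGradedAlgebra

theorem isHomogeneousRegularMod_X :
    IsHomogeneousRegularMod (weightedHomogeneousSubmodule k (bwtZ d n)) (mxB k d n) ⊥
      (fun i => X (Sum.inl i)) (fun _ => (1, 0)) where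
  homogeneous i := isWeightedHomogeneous_X k (bwtZ d n) (Sum.inl i)
  mem i := Ideal.subset_span ⟨i, rfl⟩
  isSMulRegular i := by
    rw [bot_sup_eq, ← Set.image_image X Sum.inl]
    exact isSMulRegular_quotient_span_X_image fun ⟨j, hj, hji⟩ =>
      (Set.mem_Iio.1 hj).ne (Sum.inl_injective hji)

variable {f : Fin d → B k d n} {α β : Fin d → ℕ}

theorem exists_isSocleGenerator_span_range (hfm : ∀ i, f i ∈ mxB k d n)
    (hreg : RingTheory.Sequence.IsWeaklyRegular (B k d n) (List.ofFn f))
    (hf : ∀ i, f i ∈ weightedHomogeneousSubmodule k (bwtZ d n) (α i, β i)) :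
    ∃ s, IsWeightedHomogeneous (bwtZ d n) s (∑ i, (α i : ℤ) - d, ∑ i, (β i : ℤ)) ∧
      IsSocleGenerator (mxB k d n) (Ideal.span (Set.range f)) s := by
  have hfreg : IsHomogeneousRegularMod (weightedHomogeneousSubmodule k (bwtZ d n)) (mxB k d n) ⊥
      f (fun i => ((α i : ℤ), (β i : ℤ))) :=
    ⟨hf, hfm, fun i => by
      rw [bot_sup_eq]
      exact isSMulRegular_quotient_span_image_Iio hreg i⟩
  obtain ⟨s, hs, hgen⟩ := exists_isSocleGenerator (e := ((1 : ℤ), (0 : ℤ)))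
    (by rintro _ ⟨i, rfl⟩; exact isWeightedHomogeneous_X k (bwtZ d n) (Sum.inl i))
    (Ideal.IsHomogeneous.bot _) hfreg isHomogeneousRegularMod_X (SetLike.one_mem_graded _)
    (by rw [bot_sup_eq]; exact isSocleGenerator_one (mxB k d n))
  rw [bot_sup_eq] at hgen
  refine ⟨s, ?_, hgen⟩
  have hdeg : ((∑ i, (α i : ℤ) - d, ∑ i, (β i : ℤ)) : ℤ × ℤ) =
      0 + ∑ i, ((α i : ℤ), (β i : ℤ)) - ∑ _i : Fin d, ((1 : ℤ), (0 : ℤ)) := by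
    ext <;> simp [Prod.fst_sum, Prod.snd_sum]
  exact hdeg ▸ hs

end SocleGenerator

section Strands

variable {k d n I}

attribute [local instance] weightedGradedAlgebra

theorem mem_H0_iff {u : B k d n} :
    Ideal.Quotient.mk I u ∈ H0 k d n I ↔ ∃ N, ∀ c ∈ mxB k d n ^ N, c * u ∈ I := by
  have hmono : Monotone fun N => Submodule.torsionBySet (B k d n) (B k d n ⧸ I)
      ((mxB k d n ^ N : Ideal (B k d n)) : Set (B k d n)) := fun _ _ hab =>
    Submodule.torsionBySet_le_torsionBySet_of_subset (Ideal.pow_le_pow_right hab)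
  rw [H0, Submodule.mem_iSup_of_directed _ hmono.directed_le]
  simp only [Submodule.mem_torsionBySet_iff, Subtype.forall, SetLike.mem_coe]
  exact exists_congr fun N => forall₂_congr fun c _ => Ideal.Quotient.eq_zero_iff_mem

theorem mem_SxDeg_iff {j : ℕ} {x : B k d n ⧸ I} :
    x ∈ SxDeg k d n I j ↔
      ∃ u, IsWeightedHomogeneous (wx d n) u j ∧ Ideal.Quotient.mk I u = x := by
  refine ⟨fun hx => ?_, fun ⟨u, hu, hux⟩ => Submodule.subset_span ⟨u, hu, hux⟩⟩
  induction hx using Submodule.span_induction with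
  | mem _ hx => exact hx
  | zero => exact ⟨0, isWeightedHomogeneous_zero .., map_zero _⟩
  | add x y _ _ hx hy =>
    obtain ⟨u, hu, rfl⟩ := hx
    obtain ⟨v, hv, rfl⟩ := hy
    exact ⟨u + v, hu.add hv, map_add ..⟩
  | smul t x _ hx =>
    obtain ⟨u, hu, rfl⟩ := hx
    have ht := isWeightedHomogeneous_wxZ_iff.1 (isWeightedHomogeneous_wxZ_algebraMap (d := d) t)
    refine ⟨algebraMap (T k n) (B k d n) t * u, zero_add j ▸ ht.mul hu, ?_⟩
    rw [← Algebra.smul_def]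
    rfl

theorem mem_SxDegZ_iff {i : ℤ} {x : B k d n ⧸ I} :
    x ∈ SxDegZ k d n I i ↔
      ∃ u, IsWeightedHomogeneous (wxZ d n) u i ∧ Ideal.Quotient.mk I u = x := by
  unfold SxDegZ
  split_ifs with hi
  · obtain ⟨j, rfl⟩ := Int.eq_ofNat_of_zero_le hi
    simp only [isWeightedHomogeneous_wxZ_iff]
    exact mem_SxDeg_iff
  · refine ⟨fun hx => ⟨0, isWeightedHomogeneous_zero .., by simpa using hx.symm⟩, ?_⟩
    rintro ⟨u, hu, rfl⟩
    have hu0 : u = 0 := by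
      by_contra hne
      exact hi (nonneg_of_isWeightedHomogeneous (by rintro (_ | _) <;> simp [wxZ]) hu hne)
    simp [hu0]

theorem mem_AcompZ_iff {i : ℤ} {x : B k d n ⧸ I} :
    x ∈ AcompZ k d n I i ↔ ∃ u, IsWeightedHomogeneous (wxZ d n) u i ∧
      (∃ N, ∀ c ∈ mxB k d n ^ N, c * u ∈ I) ∧ Ideal.Quotient.mk I u = x := by
  rw [AcompZ, Submodule.mem_inf, Submodule.restrictScalars_mem, mem_SxDegZ_iff]
  constructor
  · rintro ⟨hH, u, hu, rfl⟩
    exact ⟨u, hu, mem_H0_iff.1 hH, rfl⟩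
  · rintro ⟨u, hu, hN, rfl⟩
    exact ⟨mem_H0_iff.2 hN, u, hu, rfl⟩

theorem AcompZ_eq_bot_of_neg {i : ℤ} (hi : i < 0) : AcompZ k d n I i = ⊥ := by
  rw [AcompZ, SxDegZ, if_neg hi.not_ge, inf_bot_eq]

theorem smul_mk_eq_mk_algebraMap_mul (t : T k n) (u : B k d n) :
    t • Ideal.Quotient.mk I u = Ideal.Quotient.mk I (algebraMap (T k n) (B k d n) t * u) := by
  rw [← Algebra.smul_def]
  rfl

section TopStrand

variable {s : B k d n} {δ : ℤ}

theorem mul_mem_of_mxB_pow_mul_mem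
    (hI : I.IsHomogeneous (weightedHomogeneousSubmodule k (wxZ d n)))
    (hs : IsWeightedHomogeneous (wxZ d n) s δ) (hgen : IsSocleGenerator (mxB k d n) I s)
    {u : B k d n} {i : ℤ} (hi : δ ≤ i) (hu : IsWeightedHomogeneous (wxZ d n) u i) {N : ℕ}
    (hN : ∀ c ∈ mxB k d n ^ N, c * u ∈ I) : ∀ c ∈ mxB k d n, c * u ∈ I :=
  hgen.mul_mem_of_pow_mul_mem
    (by rintro _ ⟨j, rfl⟩; exact ⟨1, one_pos, isWeightedHomogeneous_X k (wxZ d n) (Sum.inl j)⟩)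
    hI hs (fun _ hj _ => mem_mxB_of_isWeightedHomogeneous_wxZ hj.ne') hi hu hN

theorem AcompZ_eq_bot_of_lt
    (hI : I.IsHomogeneous (weightedHomogeneousSubmodule k (wxZ d n)))
    (hs : IsWeightedHomogeneous (wxZ d n) s δ) (hgen : IsSocleGenerator (mxB k d n) I s)
    {i : ℤ} (hi : δ < i) : AcompZ k d n I i = ⊥ := by
  refine (Submodule.eq_bot_iff _).2 fun x hx => ?_
  obtain ⟨u, hu, ⟨N, hN⟩, rfl⟩ := mem_AcompZ_iff.1 hx
  exact Ideal.Quotient.eq_zero_iff_mem.2 <| hgen.mem_of_forall_mul_mem hI hs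
    (fun _ hj _ => mem_mxB_of_isWeightedHomogeneous_wxZ hj.ne') hi hu
    (mul_mem_of_mxB_pow_mul_mem hI hs hgen hi.le hu hN)

theorem exists_linearEquiv_AcompZ
    (hI : I.IsHomogeneous (weightedHomogeneousSubmodule k (wxZ d n)))
    (hs : IsWeightedHomogeneous (wxZ d n) s δ) (hgen : IsSocleGenerator (mxB k d n) I s) :
    ∃ e : T k n ≃ₗ[T k n] AcompZ k d n I δ, ∀ t,
      (e t : B k d n ⧸ I) = Ideal.Quotient.mk I (algebraMap (T k n) (B k d n) t * s) := by
  have hsA : Ideal.Quotient.mk I s ∈ AcompZ k d n I δ := mem_AcompZ_iff.2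
    ⟨s, hs, ⟨1, fun c hc => (hgen.mul_mem_iff c).2 (by rwa [pow_one] at hc)⟩, rfl⟩
  let e := LinearMap.toSpanSingleton (T k n) (AcompZ k d n I δ) ⟨_, hsA⟩
  have he (t : T k n) :
      (e t : B k d n ⧸ I) = Ideal.Quotient.mk I (algebraMap (T k n) (B k d n) t * s) :=
    smul_mk_eq_mk_algebraMap_mul t s
  have hinj : Function.Injective e := by
    refine (injective_iff_map_eq_zero e).2 fun t ht => (algebraMap_mem_mxB_iff (d := d)).1 ?_
    rw [← hgen.mul_mem_iff, ← Ideal.Quotient.eq_zero_iff_mem, ← he, ht, ZeroMemClass.coe_zero]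
  have hsurj : Function.Surjective e := by
    rintro ⟨x, hx⟩
    obtain ⟨u, hu, ⟨N, hN⟩, rfl⟩ := mem_AcompZ_iff.1 hx
    obtain ⟨r, hr⟩ :=
      hgen.exists_sub_mul_mem u (mul_mem_of_mxB_pow_mul_mem hI hs hgen le_rfl hu hN)
    have hrs := (hgen.mul_mem_iff _).2 (sub_algebraMap_reduceX_mem_mxB r)
    refine ⟨reduceX k d n r, Subtype.ext ?_⟩
    rw [he, eq_comm, Ideal.Quotient.eq]
    convert I.add_mem hr hrs using 1
    ring
  exact ⟨LinearEquiv.ofBijective e ⟨hinj, hsurj⟩, he⟩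

end TopStrand

theorem mem_Scomp_iff {p : ℕ × ℕ} {x : B k d n ⧸ I} :
    x ∈ Scomp k d n I p ↔ ∃ u, IsWeightedHomogeneous (bwtZ d n) u ((p.1 : ℤ), (p.2 : ℤ)) ∧
      Ideal.Quotient.mk I u = x := by
  simp only [isWeightedHomogeneous_bwtZ_iff]
  rfl

theorem mk_algebraMap_mul_mem_Scomp_iff {s : B k d n} {a b : ℕ} {τ : ℤ}
    (hI : I.IsHomogeneous (weightedHomogeneousSubmodule k (bwtZ d n)))
    (hs : IsWeightedHomogeneous (bwtZ d n) s ((a : ℤ), τ))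
    (hgen : IsSocleGenerator (mxB k d n) I s) {t : T k n} :
    Ideal.Quotient.mk I (algebraMap (T k n) (B k d n) t * s) ∈ Scomp k d n I (a, b) ↔
      t ∈ TcompZ k n (b - τ) := by
  rw [mem_Scomp_iff]
  constructor
  · rintro ⟨u, hu, hut⟩
    rw [Ideal.Quotient.eq] at hut
    obtain ⟨r, hr, hur⟩ := exists_mem_sub_mul_mem_of_isHomogeneous hI hs hu hut
    have hrs : (r - algebraMap (T k n) (B k d n) t) * s ∈ I := by
      convert I.sub_mem hut hur using 1
      ring
    have hrt := reduceX_eq_zero_iff.2 ((hgen.mul_mem_iff _).1 hrs)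
    rw [map_sub, reduceX_algebraMap, sub_eq_zero] at hrt
    rw [Prod.mk_sub_mk, sub_self] at hr
    exact hrt ▸ reduceX_mem_TcompZ hr
  · intro ht
    refine ⟨_, ?_, rfl⟩
    have hts := (isWeightedHomogeneous_bwtZ_algebraMap ht).mul hs
    rwa [Prod.mk_add_mk, zero_add, sub_add_cancel] at hts

end Strands

/-- `A_i = 0` for `i < 0` and for `i > δ`, and there is a graded
isomorphism of `T`-modules `A_δ ≅ T(−τ)`: a `T`-linear isomorphism identifying, for each
internal degree `b`, the component `A_{(δ,b)}` with the homogeneous component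
`T(−τ)_b = T_{b−τ}`. -/
theorem strand_vanishing_and_top
    (f : Fin d → B k d n) (α β : Fin d → ℕ)
    (hfm : ∀ i, f i ∈ mxB k d n)
    (hreg : RingTheory.Sequence.IsRegular (B k d n) (List.ofFn f))
    (hbihom : ∀ i, f i ∈ weightedHomogeneousSubmodule k (bwt d n) (α i, β i))
    (hne : ∀ i, f i ≠ 0)
    (hI : I = Ideal.span (Set.range f))
    (δ τ : ℤ) (hδ : δ = (∑ i, (α i : ℤ)) - d) (hτ : τ = ∑ i, (β i : ℤ)) :
    (∀ i : ℤ, (i < 0 ∨ δ < i) → AcompZ k d n I i = ⊥) ∧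
    (∃ e : (AcompZ k d n I δ) ≃ₗ[T k n] T k n,
      (∀ (a b : ℕ), (a : ℤ) = δ →
        ∀ s : AcompZ k d n I δ, (s : B k d n ⧸ I) ∈ Scomp k d n I (a, b) →
          e s ∈ TcompZ k n ((b : ℤ) - τ)) ∧
      (∀ (a b : ℕ), (a : ℤ) = δ →
        ∀ t : T k n, t ∈ TcompZ k n ((b : ℤ) - τ) →
          ((e.symm t : AcompZ k d n I δ) : B k d n ⧸ I) ∈ Scomp k d n I (a, b))) := by
  have hf (i) : IsWeightedHomogeneous (bwtZ d n) (f i) ((α i : ℤ), (β i : ℤ)) :=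
    isWeightedHomogeneous_bwtZ_iff.2 (hbihom i)
  obtain ⟨s, hs, hgen⟩ := exists_isSocleGenerator_span_range hfm hreg.toIsWeaklyRegular hf
  rw [← hδ, ← hτ] at hs
  rw [← hI] at hgen
  let := weightedGradedAlgebra k (bwtZ d n)
  let := weightedGradedAlgebra k (wxZ d n)
  have hIx : I.IsHomogeneous (weightedHomogeneousSubmodule k (wxZ d n)) :=
    hI ▸ isHomogeneous_span_range fun i => isWeightedHomogeneous_wxZ_of_bwtZ (hf i)
  have hIb : I.IsHomogeneous (weightedHomogeneousSubmodule k (bwtZ d n)) :=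
    hI ▸ isHomogeneous_span_range hf
  have hsx : IsWeightedHomogeneous (wxZ d n) s δ := isWeightedHomogeneous_wxZ_of_bwtZ hs
  obtain ⟨e, he⟩ := exists_linearEquiv_AcompZ hIx hsx hgen
  refine ⟨fun i hi => hi.elim AcompZ_eq_bot_of_neg (AcompZ_eq_bot_of_lt hIx hsx hgen),
    e.symm, ?_, ?_⟩
  · rintro a b rfl x hx
    obtain ⟨t, rfl⟩ := e.surjective x
    rwa [e.symm_apply_apply, ← mk_algebraMap_mul_mem_Scomp_iff hIb hs hgen, ← he]
  · rintro a b rfl t ht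
    rwa [e.symm_symm, he, mk_algebraMap_mul_mem_Scomp_iff hIb hs hgen]

end Stmt3
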